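/- Let F be a linearly closed differential field of characteristic zero, and let K : F^ℓ → F^ℓ be an ℓ×ℓ matrix differential operator of order N with invertible leading coefficient, i.e., (Ku)_i = Σ_{j=1}^ℓ Σ_{n=0}^N K_{ij,n} ∂^n u_j with the matrix K_N = (K_{ij,N})_{i,j} ∈ Mat_{ℓ×ℓ}(F) invertible. Then for every ℓ×ℓ matrix differential operator S over F that is skewadjoint, i.e., S*(u) = −S(u) for all u ∈ F^ℓ, there exists an ℓ×ℓ matrix differential operator P over F such that K(P(u)) − P*(K*(u)) = S(u) for all u ∈ F^ℓ. -/

import Mathlib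

/-- A derivation on a field: an additive map satisfying the Leibniz rule. -/
structure IsDerivation {F : Type*} [Field F] (d : F → F) : Prop where
  map_add : ∀ a b : F, d (a + b) = d a + d b
  leibniz : ∀ a b : F, d (a * b) = d a * b + a * d b

/-- A differential field `(F, d)` is linearly closed if every linear differential equation
`a_M d^M u + ⋯ + a_1 d u + a_0 u = b` with `a_M ≠ 0` has a solution in `F`,
and has a nonzero solution for `b = 0`, provided that `M ≥ 1`. -/
def LinearlyClosed {F : Type*} [Field F] (d : F → F) : Prop :=
  ∀ (M : ℕ) (a : ℕ → F), a M ≠ 0 →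
    (∀ b : F, ∃ u : F, ∑ n ∈ Finset.range (M + 1), a n * d^[n] u = b) ∧
    (1 ≤ M → ∃ u : F, u ≠ 0 ∧ ∑ n ∈ Finset.range (M + 1), a n * d^[n] u = 0)

/-- The `ℓ×ℓ` matrix differential operator `(Au)_i = Σ_j Σ_{n=0}^M A_{ij,n} d^n (u j)`. -/
noncomputable def matOp {F : Type*} [Field F] (d : F → F) {l : ℕ} (M : ℕ)
    (A : Fin l → Fin l → ℕ → F) (u : Fin l → F) : Fin l → F :=
  fun i => ∑ j, ∑ n ∈ Finset.range (M + 1), A i j n * d^[n] (u j)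

/-- The formal adjoint `(A*u)_i = Σ_j Σ_{n=0}^M (−1)^n d^n (A_{ji,n} u_j)`. -/
noncomputable def matOpAdj {F : Type*} [Field F] (d : F → F) {l : ℕ} (M : ℕ)
    (A : Fin l → Fin l → ℕ → F) (u : Fin l → F) : Fin l → F :=
  fun i => ∑ j, ∑ n ∈ Finset.range (M + 1), (-1 : F) ^ n * d^[n] (A j i n * u j)

/-!
Since `S = T - T*` with `T = S / 2`, it suffices to solve `K P - P* K* = T - T*`. Putting
`P = D^m Q K_Nᵀ` with `N + m` even and large reduces this to `G* Q - Q* G = T - T*` for a monic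
operator `G` whose order exceeds that of `T`. For a skew-symmetric matrix `Y` acting on jets, let
`Q u` be the last block of `Y` applied to the jet of `u`. If `A` is the companion matrix of `G`,
then `G* Q - Q* G` is given by the matrix `-(Y' + Aᵀ Y + Y A)` on jets, so that `Y` has to satisfy
a linear Lyapunov equation whose right-hand side is the skew-symmetrisation of a matrix
representing `T`. It is the skew part of a solution `X` for that matrix itself. Such an `X` exists
because a connection `∇` on a finite-dimensional space is surjective: modulo the image of `∇` one
can integrate by parts, so a linear relation among the `∇ⁱ v` becomes `(L f) • v ≡ 0` for a scalar
differential operator `L` and all `f`, and `L f = 1` is solvable.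
-/

open Finset Matrix

/-- Every inhomogeneous linear differential equation with nonzero leading coefficient is solvable;
unlike `LinearlyClosed`, this says nothing about homogeneous equations. -/
def LinearlySurjective {F : Type*} [Field F] (d : F → F) : Prop :=
  ∀ (M : ℕ) (a : ℕ → F), a M ≠ 0 → ∀ b : F, ∃ u : F, ∑ n ∈ range (M + 1), a n * d^[n] u = b

theorem IsDerivation.exists_derivation {F : Type*} [Field F] {d : F → F} (hd : IsDerivation d) :
    ∃ δ : Derivation ℤ F F, ⇑δ = d :=
  ⟨Derivation.mk' (AddMonoidHom.mk' d hd.map_add).toIntLinearMap fun a b => by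
    simpa [mul_comm, add_comm] using hd.leibniz a b, rfl⟩

section FormalAdjoint

variable {F : Type*} [CommRing F] (δ : Derivation ℤ F F) {ι κ μ : Type*}

/-- The entrywise derivation `D` of vectors over a differential ring. -/
def vecDeriv (ι : Type*) : Module.End ℤ (ι → F) :=
  (δ : F →ₗ[ℤ] F).compLeft ι

@[simp]
theorem vecDeriv_apply (u : ι → F) (i : ι) : vecDeriv δ ι u i = δ (u i) := rfl

theorem neg_vecDeriv : -vecDeriv δ ι = vecDeriv (-δ) ι := rfl

theorem vecDeriv_pow_apply (n : ℕ) (u : ι → F) (i : ι) :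
    (vecDeriv δ ι ^ n) u i = δ^[n] (u i) := by
  induction n generalizing u with
  | zero => rfl
  | succ n ih =>
    rw [pow_succ, Module.End.mul_apply, ih, Function.iterate_succ_apply, vecDeriv_apply]

theorem neg_derivation_iterate_apply (n : ℕ) (x : F) : (-δ)^[n] x = (-1) ^ n * δ^[n] x := by
  induction n with
  | zero => simp
  | succ n ih =>
    rw [Function.iterate_succ_apply', ih, Function.iterate_succ_apply', pow_succ]
    rcases neg_one_pow_eq_or F n with h | h <;> simp [h]

theorem neg_vecDeriv_pow_apply (n : ℕ) (u : ι → F) (i : ι) :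
    ((-vecDeriv δ ι) ^ n) u i = (-1) ^ n * δ^[n] (u i) := by
  rw [neg_vecDeriv, vecDeriv_pow_apply, neg_derivation_iterate_apply]

variable [Fintype ι]

theorem vecDeriv_mulVec (A : Matrix κ ι F) (u : ι → F) :
    vecDeriv δ κ (A *ᵥ u) = A.map δ *ᵥ u + A *ᵥ vecDeriv δ ι u := by
  ext i
  simp [mulVec, dotProduct, sum_add_distrib, add_comm, mul_comm]

variable [Fintype κ] [Fintype μ]

/-- `P` is a matrix differential operator `∑_{n < N} A_n D^n` of order less than `N`, and `Q` is its
formal adjoint `∑_{n < N} (-D)^n A_nᵀ`. The pair is recorded, rather than `Q` as a function of `P`,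
because `P` need not determine its coefficients. -/
def HasFormalAdjoint (N : ℕ) (P : (ι → F) → κ → F) (Q : (κ → F) → ι → F) : Prop :=
  ∃ A : ℕ → Matrix κ ι F,
    (∀ u, P u = ∑ n ∈ range N, A n *ᵥ (vecDeriv δ ι ^ n) u) ∧
      ∀ v, Q v = ∑ n ∈ range N, ((-vecDeriv δ ι) ^ n) ((A n)ᵀ *ᵥ v)

variable {δ}

namespace HasFormalAdjoint

variable {N M : ℕ} {P P' : (ι → F) → κ → F} {Q Q' : (κ → F) → ι → F}

theorem monomial {n : ℕ} (hn : n < N) (A : Matrix κ ι F) :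
    HasFormalAdjoint δ N (fun u => A *ᵥ (vecDeriv δ ι ^ n) u)
      (fun v => ((-vecDeriv δ ι) ^ n) (Aᵀ *ᵥ v)) := by
  refine ⟨Pi.single n A, fun u => ?_, fun v => ?_⟩ <;>
  · rw [sum_eq_single_of_mem n (mem_range.2 hn) fun m _ hm => by simp [hm], Pi.single_eq_same]

theorem zero : HasFormalAdjoint δ N (0 : (ι → F) → κ → F) 0 :=
  ⟨0, by simp, by simp⟩

theorem add (h : HasFormalAdjoint δ N P Q) (h' : HasFormalAdjoint δ N P' Q') :
    HasFormalAdjoint δ N (P + P') (Q + Q') := by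
  obtain ⟨A, hP, hQ⟩ := h
  obtain ⟨A', hP', hQ'⟩ := h'
  exact ⟨A + A', fun u => by simp [hP, hP', add_mulVec, sum_add_distrib],
    fun v => by simp [hQ, hQ', add_mulVec, sum_add_distrib]⟩

theorem neg (h : HasFormalAdjoint δ N P Q) :
    HasFormalAdjoint δ N (fun u => -P u) (fun v => Q (-v)) := by
  obtain ⟨A, hP, hQ⟩ := h
  exact ⟨-A, fun u => by simp [hP, neg_mulVec],
    fun v => by simp [hQ, neg_mulVec, mulVec_neg]⟩

theorem sum {α : Type*} {s : Finset α} {P : α → (ι → F) → κ → F} {Q : α → (κ → F) → ι → F}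
    (h : ∀ i ∈ s, HasFormalAdjoint δ N (P i) (Q i)) :
    HasFormalAdjoint δ N (∑ i ∈ s, P i) (∑ i ∈ s, Q i) := by
  classical
  induction s using Finset.induction_on with
  | empty => exact zero
  | insert a s ha ih =>
    rw [sum_insert ha, sum_insert ha]
    exact (h a (mem_insert_self a s)).add (ih fun i hi => h i (mem_insert_of_mem hi))

theorem mono (hNM : N ≤ M) (h : HasFormalAdjoint δ N P Q) : HasFormalAdjoint δ M P Q := by
  obtain ⟨A, hP, hQ⟩ := h
  convert sum (δ := δ) (s := range N) fun n hn =>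
    monomial ((mem_range.1 hn).trans_le hNM) (A n) using 1
  · ext u; simp [hP]
  · ext v; simp [hQ]

theorem mulVec_comp (B : Matrix μ κ F) (h : HasFormalAdjoint δ N P Q) :
    HasFormalAdjoint δ N (fun u => B *ᵥ P u) (fun v => Q (Bᵀ *ᵥ v)) := by
  obtain ⟨A, hP, hQ⟩ := h
  exact ⟨fun n => B * A n, fun u => by simp [hP, mulVec_sum],
    fun v => by simp [hQ, transpose_mul]⟩

theorem vecDeriv_comp (h : HasFormalAdjoint δ N P Q) :
    HasFormalAdjoint δ (N + 1) (fun u => vecDeriv δ κ (P u))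
      (fun v => Q ((-vecDeriv δ κ) v)) := by
  obtain ⟨A, hP, hQ⟩ := h
  convert sum (δ := δ) (N := N + 1) (s := range N) fun n hn =>
    (monomial (Nat.lt_succ_of_lt (mem_range.1 hn)) ((A n).map δ)).add
      (monomial (Nat.succ_lt_succ (mem_range.1 hn)) (A n)) using 1
  · ext1 u
    simp [hP, vecDeriv_mulVec, pow_succ']
  · ext1 v
    simp only [hQ, Finset.sum_apply, Pi.add_apply]
    refine sum_congr rfl fun n _ => ?_
    have product_rule : (A n)ᵀ *ᵥ (-vecDeriv δ κ) v
        = ((A n).map δ)ᵀ *ᵥ v + (-vecDeriv δ ι) ((A n)ᵀ *ᵥ v) := by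
      simp [vecDeriv_mulVec, transpose_map, mulVec_neg]
    rw [product_rule, map_add, pow_succ, Module.End.mul_apply]

theorem neg_vecDeriv_comp (h : HasFormalAdjoint δ N P Q) :
    HasFormalAdjoint δ (N + 1) (fun u => (-vecDeriv δ κ) (P u))
      (fun v => Q (vecDeriv δ κ v)) := by
  simpa using h.vecDeriv_comp.neg

theorem vecDeriv_pow_comp (m : ℕ) (h : HasFormalAdjoint δ N P Q) :
    HasFormalAdjoint δ (N + m) (fun u => (vecDeriv δ κ ^ m) (P u))
      (fun v => Q (((-vecDeriv δ κ) ^ m) v)) := by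
  induction m with
  | zero => exact h
  | succ m ih =>
    simp only [pow_succ' (vecDeriv δ κ), pow_succ (-vecDeriv δ κ), Module.End.mul_apply]
    exact ih.vecDeriv_comp

theorem neg_vecDeriv_pow_comp (m : ℕ) (h : HasFormalAdjoint δ N P Q) :
    HasFormalAdjoint δ (N + m) (fun u => ((-vecDeriv δ κ) ^ m) (P u))
      (fun v => Q ((vecDeriv δ κ ^ m) v)) := by
  induction m with
  | zero => exact h
  | succ m ih =>
    simp only [pow_succ' (-vecDeriv δ κ), pow_succ (vecDeriv δ κ), Module.End.mul_apply]
    exact ih.neg_vecDeriv_comp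

theorem symm (h : HasFormalAdjoint δ N P Q) : HasFormalAdjoint δ N Q P := by
  classical
  obtain ⟨A, hP, hQ⟩ := h
  have h_id : HasFormalAdjoint δ 1 (fun u : κ → F => u) fun v => v := by
    simpa using monomial (δ := δ) zero_lt_one (1 : Matrix κ κ F)
  convert sum (δ := δ) (s := range N) fun n hn =>
    ((h_id.mulVec_comp (A n)ᵀ).neg_vecDeriv_pow_comp n).mono
      (show 1 + n ≤ N by have := mem_range.1 hn; omega) using 1
  · ext1 v; simp [hQ]
  · ext1 u; simp [hP]

theorem comp_mulVec (B : Matrix ι μ F) (h : HasFormalAdjoint δ N P Q) :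
    HasFormalAdjoint δ N (fun u => P (B *ᵥ u)) (fun v => Bᵀ *ᵥ Q v) := by
  simpa using (h.symm.mulVec_comp Bᵀ).symm

protected theorem map_add (h : HasFormalAdjoint δ N P Q) (u v : ι → F) :
    P (u + v) = P u + P v := by
  obtain ⟨A, hP, -⟩ := h
  simp only [hP, _root_.map_add, mulVec_add, sum_add_distrib]

theorem exists_sub_eq_of_skew {S S' : (ι → F) → ι → F} (h_two : IsUnit (2 : F))
    (h : HasFormalAdjoint δ N S S') (h_skew : ∀ u, S' u = -S u) :
    ∃ T T', HasFormalAdjoint δ N T T' ∧ ∀ u, T u - T' u = S u := by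
  classical
  obtain ⟨c, hc⟩ := h_two.exists_left_inv
  refine ⟨_, _, h.mulVec_comp (c • (1 : Matrix ι ι F)), fun u => ?_⟩
  have h_double : S u = (2 : F) • S (c • u) := by
    rw [two_smul, ← h.map_add, ← two_smul F, smul_smul, mul_comm, hc, one_smul]
  simp only [transpose_smul, transpose_one, smul_mulVec, one_mulVec, h_skew, sub_neg_eq_add]
  rw [h_double, smul_smul, hc, one_smul, two_smul]

end HasFormalAdjoint

end FormalAdjoint

theorem exists_eq_sum_range_smul {R V : Type*} [Ring R] [AddCommGroup V] [Module R V]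
    [IsNoetherian R V] (x : ℕ → V) :
    ∃ (n : ℕ) (c : ℕ → R), x n = ∑ i ∈ range n, c i • x i := by
  let U : ℕ →o Submodule R V :=
    ⟨fun n => Submodule.span R (x '' range n), fun m n hmn =>
      Submodule.span_mono (Set.image_mono (by simpa using hmn))⟩
  obtain ⟨n, hn⟩ := monotone_stabilizes_iff_noetherian.2 ‹IsNoetherian R V› U
  have h_mem : x n ∈ U (n + 1) := Submodule.subset_span ⟨n, by simp, rfl⟩
  rw [← hn (n + 1) n.le_succ] at h_mem
  obtain ⟨c, hc⟩ := (Submodule.mem_span_image_finset_iff_exists_fun' R).1 h_mem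
  exact ⟨n, c, hc.symm⟩

theorem smul_iterate_sub_mem_range {F V : Type*} [CommRing F] [AddCommGroup V] [Module F V]
    {δ : Derivation ℤ F F} {nabla : V →+ V}
    (h_leibniz : ∀ (f : F) (v : V), nabla (f • v) = δ f • v + f • nabla v)
    (n : ℕ) (f : F) (v : V) : f • nabla^[n] v - (-δ)^[n] f • v ∈ nabla.range := by
  induction n generalizing f with
  | zero => simp
  | succ n ih =>
    have h_step : f • nabla^[n + 1] v - (-δ)^[n + 1] f • v
        = nabla (f • nabla^[n] v) + ((-δ) f • nabla^[n] v - (-δ)^[n] ((-δ) f) • v) := by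
      rw [h_leibniz, Function.iterate_succ_apply', Function.iterate_succ_apply,
        Derivation.neg_apply, neg_smul]
      abel
    rw [h_step]
    exact add_mem ⟨_, rfl⟩ (ih _)

section LinearlySurjective

variable {F : Type*} [Field F] {δ : Derivation ℤ F F}

theorem LinearlySurjective.exists_neg_vecDeriv_pow_sub_eq (h : LinearlySurjective δ) {n : ℕ}
    {P Q : (Unit → F) → Unit → F} (hP : HasFormalAdjoint δ n P Q) (b : Unit → F) :
    ∃ u, ((-vecDeriv δ Unit) ^ n) u - P u = b := by
  obtain ⟨A, hP, -⟩ := hP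
  obtain ⟨y, hy⟩ := h n (fun i => if i < n then -A i () () else (-1) ^ n) (by simp) (b ())
  refine ⟨fun _ => y, funext fun _ => ?_⟩
  rw [sum_range_succ, sum_congr rfl fun i hi => by rw [if_pos (mem_range.1 hi)]] at hy
  simp only [lt_irrefl, if_false, neg_mul, sum_neg_distrib] at hy
  simp only [Pi.sub_apply, hP, Finset.sum_apply, neg_vecDeriv_pow_apply, mulVec, dotProduct,
    vecDeriv_pow_apply, univ_unique, sum_singleton, PUnit.default_eq_unit]
  linear_combination hy

/-- The left-hand side is the formal adjoint of `δⁿ - ∑ i < n, c i * δⁱ`, applied to `f`. -/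
theorem LinearlySurjective.exists_adjoint_eq (h : LinearlySurjective δ) (n : ℕ) (c : ℕ → F)
    (b : F) : ∃ f, (-δ)^[n] f - ∑ i ∈ range n, (-δ)^[i] (c i * f) = b := by
  have h_adj : HasFormalAdjoint δ n _ _ :=
    ⟨fun i => (of fun _ _ => c i : Matrix Unit Unit F), fun _ => rfl, fun _ => rfl⟩
  obtain ⟨u, hu⟩ := h.exists_neg_vecDeriv_pow_sub_eq h_adj.symm fun _ => b
  refine ⟨u (), ?_⟩
  simpa [neg_vecDeriv, vecDeriv_pow_apply, mulVec, dotProduct] using congrFun hu ()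

theorem LinearlySurjective.surjective_of_leibniz {V : Type*} [AddCommGroup V] [Module F V]
    [FiniteDimensional F V] {nabla : V →+ V} (h : LinearlySurjective δ)
    (h_leibniz : ∀ (f : F) (v : V), nabla (f • v) = δ f • v + f • nabla v) :
    Function.Surjective nabla := by
  intro v
  obtain ⟨n, c, h_rel⟩ := exists_eq_sum_range_smul (R := F) fun i => nabla^[i] v
  obtain ⟨f, hf⟩ := h.exists_adjoint_eq n c 1
  have h_lead := smul_iterate_sub_mem_range h_leibniz n f v
  have h_lower := sum_mem fun i (_ : i ∈ range n) =>
    smul_iterate_sub_mem_range h_leibniz i (c i * f) v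
  have h_cancel : f • nabla^[n] v = ∑ i ∈ range n, (c i * f) • nabla^[i] v := by
    simp only [h_rel, smul_sum, smul_smul, mul_comm f]
  have h_eq : v = (∑ i ∈ range n, ((c i * f) • nabla^[i] v - (-δ)^[i] (c i * f) • v))
      - (f • nabla^[n] v - (-δ)^[n] f • v) := by
    rw [h_cancel, sum_sub_distrib, sub_sub_sub_cancel_left, ← sum_smul, ← sub_smul, hf, one_smul]
  exact AddMonoidHom.mem_range.1 (h_eq ▸ sub_mem h_lower h_lead)

theorem LinearlySurjective.exists_lyapunov_solution {κ : Type*} [Fintype κ]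
    (h : LinearlySurjective δ) (A C : Matrix κ κ F) : ∃ X, X.map δ + Aᵀ * X + X * A = C :=
  h.surjective_of_leibniz (V := Matrix κ κ F)
    (nabla := AddMonoidHom.mk' (fun X => X.map δ + Aᵀ * X + X * A) fun X Y => by
      rw [Matrix.map_add _ (map_add δ), mul_add, add_mul]
      abel)
    (fun f X => by
      ext i j
      simp [Matrix.add_apply, add_assoc, mul_comm (X i j), add_comm]) C

end LinearlySurjective

section Jet

variable {F : Type*} [CommRing F] (δ : Derivation ℤ F F) {N p : ℕ} {ι κ : Type*}
  [Fintype ι] [DecidableEq ι]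

/-- The inclusion of the `i`-th block `ι → F` into the space `Fin N × ι → F` of jets of order less
than `N`; its transpose is the projection onto that block. -/
def jetIncl (F ι : Type*) [CommRing F] [DecidableEq ι] (i : Fin N) : Matrix (Fin N × ι) ι F :=
  (1 : Matrix (Fin N × ι) (Fin N × ι) F).submatrix id (Prod.mk i)

theorem transpose_jetIncl_mulVec (i : Fin N) (w : Fin N × ι → F) :
    (jetIncl F ι i)ᵀ *ᵥ w = fun k => w (i, k) := by
  ext k
  simp [jetIncl, mulVec, dotProduct, one_apply]

theorem transpose_jetIncl_mulVec_jetIncl_mulVec (i j : Fin N) (v : ι → F) :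
    (jetIncl F ι i)ᵀ *ᵥ (jetIncl F ι j *ᵥ v) = if i = j then v else 0 := by
  rw [transpose_jetIncl_mulVec]
  ext k
  split_ifs with hij <;> simp [jetIncl, mulVec, dotProduct, one_apply, hij]

theorem vecDeriv_jetIncl_mulVec (i : Fin N) (v : ι → F) :
    vecDeriv δ _ (jetIncl F ι i *ᵥ v) = jetIncl F ι i *ᵥ vecDeriv δ ι v := by
  have h_const : (jetIncl F ι i).map δ = 0 := by
    ext k j
    by_cases h : k = (i, j) <;> simp [jetIncl, one_apply, h]
  rw [vecDeriv_mulVec, h_const, zero_mulVec, zero_add]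

/-- The jet `(u, D u, …, D^(N-1) u)`. -/
def jet (N : ℕ) (u : ι → F) : Fin N × ι → F :=
  ∑ i : Fin N, jetIncl F ι i *ᵥ (vecDeriv δ ι ^ (i : ℕ)) u

/-- The formal adjoint `(v₀, …, v_(N-1)) ↦ ∑ i, (-D)^i v_i` of `jet`. -/
def jetAdj (N : ℕ) : (Fin N × ι → F) →ₗ[ℤ] ι → F :=
  ∑ i : Fin N, ((-vecDeriv δ ι) ^ (i : ℕ)) ∘ₗ (mulVecLin (jetIncl F ι i)ᵀ).restrictScalars ℤ

theorem jetAdj_apply (w : Fin N × ι → F) :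
    jetAdj δ N w = ∑ i : Fin N, ((-vecDeriv δ ι) ^ (i : ℕ)) ((jetIncl F ι i)ᵀ *ᵥ w) :=
  LinearMap.sum_apply _ _ _

theorem transpose_jetIncl_mulVec_jet (i : Fin N) (u : ι → F) :
    (jetIncl F ι i)ᵀ *ᵥ jet δ N u = (vecDeriv δ ι ^ (i : ℕ)) u := by
  simp [jet, mulVec_sum, transpose_jetIncl_mulVec_jetIncl_mulVec, -mulVec_mulVec]

theorem jetAdj_jetIncl_mulVec (i : Fin N) (v : ι → F) :
    jetAdj δ N (jetIncl F ι i *ᵥ v) = ((-vecDeriv δ ι) ^ (i : ℕ)) v := by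
  simp [jetAdj_apply, transpose_jetIncl_mulVec_jetIncl_mulVec, -mulVec_mulVec, apply_ite]

variable {δ}

theorem hasFormalAdjoint_jet : HasFormalAdjoint δ N (jet δ N (ι := ι)) (jetAdj δ N) := by
  convert HasFormalAdjoint.sum (δ := δ) (s := univ) fun (i : Fin N) _ =>
    HasFormalAdjoint.monomial i.isLt (jetIncl F ι i) using 1
  · ext1 u; simp [jet]
  · ext1 w; simp [jetAdj_apply]

theorem hasFormalAdjoint_iff_jet [Fintype κ] {P : (ι → F) → κ → F} {Q : (κ → F) → ι → F} :
    HasFormalAdjoint δ N P Q ↔ ∃ c : Matrix κ (Fin N × ι) F,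
      (∀ u, P u = c *ᵥ jet δ N u) ∧ ∀ v, Q v = jetAdj δ N (cᵀ *ᵥ v) := by
  constructor
  · rintro ⟨A, hP, hQ⟩
    refine ⟨∑ i : Fin N, A i * (jetIncl F ι i)ᵀ, fun u => ?_, fun v => ?_⟩
    · simp [hP, sum_range, sum_mulVec, ← mulVec_mulVec, transpose_jetIncl_mulVec_jet]
    · simp [hQ, sum_range, transpose_sum, transpose_mul, sum_mulVec, ← mulVec_mulVec,
        jetAdj_jetIncl_mulVec]
  · rintro ⟨c, hP, hQ⟩
    rw [funext hP, funext hQ]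
    exact hasFormalAdjoint_jet.mulVec_comp c

/-- The companion matrix of the monic operator `D^(p+1) + c ∘ jet`, characterised by
`vecDeriv_jet`. -/
def jetCompanion (c : Matrix ι (Fin (p + 1) × ι) F) :
    Matrix (Fin (p + 1) × ι) (Fin (p + 1) × ι) F :=
  ∑ i : Fin p, jetIncl F ι i.castSucc * (jetIncl F ι i.succ)ᵀ - jetIncl F ι (Fin.last p) * c

theorem vecDeriv_jet (c : Matrix ι (Fin (p + 1) × ι) F) (u : ι → F) :
    vecDeriv δ _ (jet δ (p + 1) u) = jetCompanion c *ᵥ jet δ (p + 1) u +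
      jetIncl F ι (Fin.last p) *ᵥ ((vecDeriv δ ι ^ (p + 1)) u + c *ᵥ jet δ (p + 1) u) := by
  have h_shift : jetCompanion c *ᵥ jet δ (p + 1) u
      = ∑ i : Fin p, jetIncl F ι i.castSucc *ᵥ (vecDeriv δ ι ^ (i + 1 : ℕ)) u
        - jetIncl F ι (Fin.last p) *ᵥ c *ᵥ jet δ (p + 1) u := by
    simp only [jetCompanion, sub_mulVec, sum_mulVec, ← mulVec_mulVec,
      transpose_jetIncl_mulVec_jet, Fin.val_succ]
  rw [h_shift, mulVec_add]
  conv_lhs => rw [jet, map_sum, Fin.sum_univ_castSucc]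
  simp only [vecDeriv_jetIncl_mulVec, ← Module.End.mul_apply, ← pow_succ', Fin.val_castSucc,
    Fin.val_last]
  abel

theorem jetAdj_vecDeriv_add (c : Matrix ι (Fin (p + 1) × ι) F) (w : Fin (p + 1) × ι → F) :
    jetAdj δ (p + 1) (vecDeriv δ _ w) + jetAdj δ (p + 1) ((jetCompanion c)ᵀ *ᵥ w) =
      -(((-vecDeriv δ ι) ^ (p + 1)) ((jetIncl F ι (Fin.last p))ᵀ *ᵥ w)
        + jetAdj δ (p + 1) (cᵀ *ᵥ (jetIncl F ι (Fin.last p))ᵀ *ᵥ w)) := by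
  have h_shift : jetAdj δ (p + 1) ((jetCompanion c)ᵀ *ᵥ w)
      = ∑ i : Fin p, ((-vecDeriv δ ι) ^ (i + 1 : ℕ)) ((jetIncl F ι i.castSucc)ᵀ *ᵥ w)
        - jetAdj δ (p + 1) (cᵀ *ᵥ (jetIncl F ι (Fin.last p))ᵀ *ᵥ w) := by
    simp only [jetCompanion, transpose_sub, transpose_sum, transpose_mul, transpose_transpose,
      sub_mulVec, sum_mulVec, ← mulVec_mulVec, map_sub, map_sum, jetAdj_jetIncl_mulVec,
      Fin.val_succ]
  have h_comm (i : Fin (p + 1)) : (jetIncl F ι i)ᵀ *ᵥ vecDeriv δ _ w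
      = -((-vecDeriv δ ι) ((jetIncl F ι i)ᵀ *ᵥ w)) := by
    simp only [transpose_jetIncl_mulVec]
    ext k
    simp
  rw [h_shift, jetAdj_apply, Fin.sum_univ_castSucc]
  simp only [h_comm, map_neg, ← Module.End.mul_apply, ← pow_succ, Fin.val_castSucc,
    Fin.val_last, sum_neg_distrib]
  abel

/-- With `e` the inclusion of the last block, `G = D^(p+1) + c ∘ jet` and `Q = eᵀ * Y ∘ jet`, the
right-hand side is `-G* (Q u) - jetAdj (Y *ᵥ e *ᵥ G u)`, and `-jetAdj (Y *ᵥ e *ᵥ v) = Q* v` if `Y`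
is skew-symmetric. -/
theorem jetAdj_lyapunov_mulVec_jet (c : Matrix ι (Fin (p + 1) × ι) F)
    (Y : Matrix (Fin (p + 1) × ι) (Fin (p + 1) × ι) F) (u : ι → F) :
    jetAdj δ (p + 1)
        ((Y.map δ + (jetCompanion c)ᵀ * Y + Y * jetCompanion c) *ᵥ jet δ (p + 1) u) =
      -(((-vecDeriv δ ι) ^ (p + 1)) ((jetIncl F ι (Fin.last p))ᵀ *ᵥ Y *ᵥ jet δ (p + 1) u)
        + jetAdj δ (p + 1)
            (cᵀ *ᵥ (jetIncl F ι (Fin.last p))ᵀ *ᵥ Y *ᵥ jet δ (p + 1) u))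
      - jetAdj δ (p + 1) (Y *ᵥ jetIncl F ι (Fin.last p) *ᵥ
          ((vecDeriv δ ι ^ (p + 1)) u + c *ᵥ jet δ (p + 1) u)) := by
  have h_split : (Y.map δ + (jetCompanion c)ᵀ * Y + Y * jetCompanion c) *ᵥ jet δ (p + 1) u
      = vecDeriv δ _ (Y *ᵥ jet δ (p + 1) u) + (jetCompanion c)ᵀ *ᵥ Y *ᵥ jet δ (p + 1) u
        - Y *ᵥ jetIncl F ι (Fin.last p) *ᵥ
          ((vecDeriv δ ι ^ (p + 1)) u + c *ᵥ jet δ (p + 1) u) := by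
    rw [vecDeriv_mulVec, vecDeriv_jet c u, mulVec_add Y]
    simp only [add_mulVec, ← mulVec_mulVec]
    abel
  rw [h_split, map_sub, map_add, jetAdj_vecDeriv_add]

end Jet

section SkewEquation

variable {F : Type*} [Field F] {δ : Derivation ℤ F F} {ι : Type*} [Fintype ι] {N M : ℕ}

theorem LinearlySurjective.exists_skew_lyapunov_solution {κ : Type*} [Fintype κ]
    (h : LinearlySurjective δ) (A C : Matrix κ κ F) :
    ∃ Y, Yᵀ = -Y ∧ Y.map δ + Aᵀ * Y + Y * A = C - Cᵀ := by
  obtain ⟨X, hX⟩ := h.exists_lyapunov_solution A C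
  refine ⟨X - Xᵀ, by simp, ?_⟩
  have hXt : Xᵀ.map δ + Aᵀ * Xᵀ + Xᵀ * A = Cᵀ := by
    rw [← hX]
    simp only [transpose_add, transpose_mul, transpose_transpose, transpose_map]
    abel
  rw [← hXt, ← hX, Matrix.map_sub _ (map_sub δ), mul_sub, sub_mul]
  abel

theorem LinearlySurjective.exists_sub_adjoint_eq_of_monic (h : LinearlySurjective δ) {p : ℕ}
    {G G' T T' : (ι → F) → ι → F} (hG : HasFormalAdjoint δ (p + 1) G G')
    (hT : HasFormalAdjoint δ (p + 1) T T') :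
    ∃ Q Q', HasFormalAdjoint δ (p + 1) Q Q' ∧ ∀ u,
      (((-vecDeriv δ ι) ^ (p + 1)) (Q u) + G' (Q u)) - Q' ((vecDeriv δ ι ^ (p + 1)) u + G u)
        = T u - T' u := by
  classical
  obtain ⟨c, hG, hG'⟩ := hasFormalAdjoint_iff_jet.1 hG
  obtain ⟨t, hT, hT'⟩ := hasFormalAdjoint_iff_jet.1 hT
  let τ : Matrix (Fin (p + 1) × ι) (Fin (p + 1) × ι) F := jetIncl F ι 0 * t
  obtain ⟨Y, h_skew, hY⟩ := h.exists_skew_lyapunov_solution (jetCompanion c) (-τ)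
  refine ⟨_, _, hasFormalAdjoint_jet.mulVec_comp ((jetIncl F ι (Fin.last p))ᵀ * Y), fun u => ?_⟩
  have h_jet := jetAdj_lyapunov_mulVec_jet (δ := δ) c Y u
  have h_τ : jetAdj δ (p + 1) (τ *ᵥ jet δ (p + 1) u) = T u := by
    rw [← mulVec_mulVec, jetAdj_jetIncl_mulVec, hT]
    rfl
  have h_τt : jetAdj δ (p + 1) (τᵀ *ᵥ jet δ (p + 1) u) = T' u := by
    rw [transpose_mul, ← mulVec_mulVec, transpose_jetIncl_mulVec_jet, hT']
    rfl
  rw [hY, transpose_neg, neg_sub_neg, sub_mulVec, map_sub, h_τ, h_τt] at h_jet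
  rw [transpose_mul, transpose_transpose, h_skew, ← mulVec_mulVec, ← mulVec_mulVec, hG, hG',
    neg_mulVec, map_neg]
  rw [← neg_sub (T' u), h_jet]
  abel

theorem LinearlySurjective.exists_sub_adjoint_eq_of_isUnit [DecidableEq ι]
    (h : LinearlySurjective δ) {a : Matrix ι ι F} (ha : IsUnit a) {K K' T T' : (ι → F) → ι → F}
    (hK : HasFormalAdjoint δ N K K') (hT : HasFormalAdjoint δ M T T') :
    ∃ R P P', HasFormalAdjoint δ R P P' ∧ ∀ u,
      (K (P u) + a *ᵥ (vecDeriv δ ι ^ N) (P u))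
        - P' (K' u + ((-vecDeriv δ ι) ^ N) (aᵀ *ᵥ u)) = T u - T' u := by
  obtain ⟨b, hab, -⟩ := isUnit_iff_exists.1 ha
  -- `N + m` is even, so that `(-D) ^ m ∘ K* ∘ bᵀ` is monic, and exceeds the order of `T`.
  let m := N + 2 * M + 2
  have h_even : Even (N + m) := ⟨N + M + 1, by omega⟩
  obtain ⟨Q, Q', hQ, h_eq⟩ := h.exists_sub_adjoint_eq_of_monic (p := 2 * N + 2 * M + 1)
    (((hK.mulVec_comp b).symm.neg_vecDeriv_pow_comp m).mono (by omega))
    (((hT.mulVec_comp b).comp_mulVec bᵀ).mono (by omega))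
  refine ⟨_, _, _, (hQ.comp_mulVec aᵀ).vecDeriv_pow_comp m, fun u => ?_⟩
  have h_at := congrArg (a *ᵥ ·) (h_eq (aᵀ *ᵥ u))
  have h_order : 2 * N + 2 * M + 1 + 1 = N + m := by omega
  have h_tr : bᵀ * aᵀ = 1 := by rw [← transpose_mul, hab, transpose_one]
  simp only [h_order, h_even.neg_pow, mulVec_sub, mulVec_add, mulVec_mulVec, hab, h_tr,
    transpose_transpose, one_mulVec] at h_at
  simp only [transpose_transpose, ← h_at, map_add, ← Module.End.mul_apply, ← pow_add,
    add_comm m N, h_even.neg_pow, add_comm (K _), add_comm (((-vecDeriv δ ι) ^ m) _)]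

end SkewEquation

section MatOp

variable {F : Type*} [Field F] (δ : Derivation ℤ F F) {l : ℕ} (M : ℕ) (A : Fin l → Fin l → ℕ → F)

theorem matOp_eq_sum (u : Fin l → F) :
    matOp δ M A u = ∑ n ∈ range (M + 1),
      (of fun i j => A i j n : Matrix _ _ F) *ᵥ (vecDeriv δ _ ^ n) u := by
  ext i
  simp only [matOp, Finset.sum_apply, mulVec, dotProduct, of_apply, vecDeriv_pow_apply]
  exact sum_comm

theorem matOpAdj_eq_sum (v : Fin l → F) :
    matOpAdj δ M A v = ∑ n ∈ range (M + 1),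
      ((-vecDeriv δ _) ^ n) ((of fun i j => A i j n : Matrix _ _ F)ᵀ *ᵥ v) := by
  ext i
  simp only [matOpAdj, Finset.sum_apply, neg_vecDeriv_pow_apply, mulVec, dotProduct,
    transpose_apply, of_apply]
  rw [sum_comm]
  refine sum_congr rfl fun n _ => ?_
  rw [← mul_sum, ← Derivation.coeFn_coe, ← Module.End.coe_pow, map_sum]

theorem hasFormalAdjoint_matOp : HasFormalAdjoint δ (M + 1) (matOp δ M A) (matOpAdj δ M A) :=
  ⟨_, matOp_eq_sum δ M A, matOpAdj_eq_sum δ M A⟩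

variable {δ}

theorem HasFormalAdjoint.exists_matOp {N : ℕ} {P Q : (Fin l → F) → Fin l → F}
    (h : HasFormalAdjoint δ N P Q) :
    ∃ (M : ℕ) (A : Fin l → Fin l → ℕ → F), matOp δ M A = P ∧ matOpAdj δ M A = Q := by
  obtain ⟨B, hP, hQ⟩ := h.mono N.le_succ
  exact ⟨N, fun i j n => B n i j, funext fun u => (matOp_eq_sum δ N _ u).trans (hP u).symm,
    funext fun v => (matOpAdj_eq_sum δ N _ v).trans (hQ v).symm⟩

end MatOp

theorem stmt_8_general {F : Type*} [Field F] [NeZero (2 : F)] {d : F → F} (hd : IsDerivation d)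
    (hls : LinearlySurjective d) {l N : ℕ} {K : Fin l → Fin l → ℕ → F}
    (hK : IsUnit (Matrix.of fun i j : Fin l => K i j N)) {MS : ℕ} {s : Fin l → Fin l → ℕ → F}
    (hskew : ∀ u : Fin l → F, matOpAdj d MS s u = - matOp d MS s u) :
    ∃ (MP : ℕ) (P : Fin l → Fin l → ℕ → F), ∀ u : Fin l → F,
      matOp d N K (matOp d MP P u) - matOpAdj d MP P (matOpAdj d N K u) = matOp d MS s u := by
  obtain ⟨δ, rfl⟩ := hd.exists_derivation
  have h_lower : HasFormalAdjoint δ N _ _ :=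
    ⟨fun n => of fun i j => K i j n, fun _ => rfl, fun _ => rfl⟩
  obtain ⟨T, T', hT, hTS⟩ := (hasFormalAdjoint_matOp δ MS s).exists_sub_eq_of_skew
    (isUnit_iff_ne_zero.2 two_ne_zero) hskew
  obtain ⟨R, P, P', hP, h_eq⟩ := hls.exists_sub_adjoint_eq_of_isUnit hK h_lower hT
  obtain ⟨MP, B, rfl, rfl⟩ := hP.exists_matOp
  refine ⟨MP, B, fun u => ?_⟩
  rw [matOp_eq_sum δ N K, matOpAdj_eq_sum δ N K, sum_range_succ, sum_range_succ, h_eq, hTS]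

/-- Let `F` be a linearly closed differential field of characteristic zero and let `K` be
an `ℓ×ℓ` matrix differential operator of order `N` with invertible leading coefficient
`K_N = (K_{ij,N})`.  Then for every skewadjoint `ℓ×ℓ` matrix differential operator `S`
(`S* = −S`) there exists an `ℓ×ℓ` matrix differential operator `P` such that
`K(P(u)) − P*(K*(u)) = S(u)` for all `u ∈ F^ℓ`. -/
theorem stmt_8 (F : Type*) [Field F] [CharZero F] (d : F → F) (hd : IsDerivation d)
    (hlc : LinearlyClosed d)
    (l N : ℕ) (K : Fin l → Fin l → ℕ → F)
    (hK : IsUnit (Matrix.of fun i j : Fin l => K i j N))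
    (MS : ℕ) (s : Fin l → Fin l → ℕ → F)
    (hskew : ∀ u : Fin l → F, matOpAdj d MS s u = - matOp d MS s u) :
    ∃ (MP : ℕ) (P : Fin l → Fin l → ℕ → F), ∀ u : Fin l → F,
      matOp d N K (matOp d MP P u) - matOpAdj d MP P (matOpAdj d N K u)
        = matOp d MS s u :=
  stmt_8_general hd (fun M a ha => (hlc M a ha).1) hK hskew
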